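/- Let n ≥ N(Y), let b ∈ ℕ with b ≥ s + 2, and let j ∈ H_{10}. Then t_j is differentiable and t_j'(x)·Π(x)·Π(x_j) ≥ 0 for all x ∈ ℝ. -/

import Mathlib

open Real Set MeasureTheory

noncomputable def trigPi (s : ℕ) (y : ℤ → ℝ) (x : ℝ) : ℝ :=
  ∏ i ∈ Finset.range (2 * s), Real.sin ((x - y ((i : ℤ) + 1)) / 2)

noncomputable def xnode (n : ℕ) (j : ℤ) : ℝ := -(j : ℝ) * (Real.pi / n)

noncomputable def jIdx (y : ℤ → ℝ) (n : ℕ) (i : ℤ) : ℤ := ⌈-(y i) * n / Real.pi⌉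

noncomputable def Oint (y : ℤ → ℝ) (n m : ℕ) (i : ℤ) : Set ℝ :=
  Set.Ioo (xnode n (jIdx y n i + m + 1)) (xnode n (jIdx y n i - m))

noncomputable def Oall (y : ℤ → ℝ) (n m : ℕ) : Set ℝ := ⋃ i : ℤ, Oint y n m i

def memH (y : ℤ → ℝ) (n m : ℕ) (j : ℤ) : Prop := xnode n j ∉ Oall y n m

noncomputable def Gam (n : ℕ) (j : ℤ) (x : ℝ) : ℝ :=
  min 1 (1 / (n * |Real.sin ((x - (xnode n j + Real.pi / n / 2)) / 2)|))

noncomputable def Jker (n b : ℕ) (j : ℤ) (x : ℝ) : ℝ :=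
  (Real.sin (n * (x - xnode n j) / 2) / Real.sin ((x - xnode n j) / 2)) ^ (2 * b) +
    (Real.sin (n * (x - xnode n (j - 1)) / 2) / Real.sin ((x - xnode n (j - 1)) / 2)) ^ (2 * b)

noncomputable def tfun (s : ℕ) (y : ℤ → ℝ) (n b : ℕ) (j : ℤ) (x : ℝ) : ℝ :=
  (∫ u in (xnode n j - Real.pi)..x, Jker n b j u * trigPi s y u) /
    (∫ u in (xnode n j - Real.pi)..(xnode n j + Real.pi), Jker n b j u * trigPi s y u)

noncomputable def chiFun (n : ℕ) (j : ℤ) (x : ℝ) : ℝ := if x ≤ xnode n j then 0 else 1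

def IsTrigPoly (m : ℕ) (P : ℝ → ℝ) : Prop :=
  ∃ a b : ℕ → ℝ, ∀ x : ℝ,
    P x = a 0 + ∑ k ∈ Finset.Icc 1 m, (a k * Real.cos (k * x) + b k * Real.sin (k * x))

noncomputable def omegaMod (k : ℕ) (f : ℝ → ℝ) (t : ℝ) : ℝ :=
  sSup {v : ℝ | ∃ δ x : ℝ, 0 < δ ∧ δ ≤ t ∧
    v = |∑ i ∈ Finset.range (k + 1), (-1 : ℝ) ^ (k - i) * (k.choose i : ℝ) * f (x + i * δ)|}

noncomputable def taufun (s : ℕ) (y : ℤ → ℝ) (n b : ℕ) (j : ℤ) (α : ℝ) (x : ℝ) : ℝ :=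
  α * (∫ u in (xnode n j - Real.pi)..x, tfun s y n b (j + 10) u) +
    (1 - α) * (∫ u in (xnode n j - Real.pi)..x, tfun s y n b (j - 10) u)

noncomputable def PsiCap (a ht hh x : ℝ) : ℝ :=
  max (x - a) 0 ^ 3 + 3 * ht * max (x - a) 0 ^ 2 + hh * max (x - a) 0

noncomputable def qPoly (dj h x : ℝ) : ℝ :=
  x ^ 4 / (8 * Real.pi) + ((Real.pi - dj) / (2 * Real.pi)) * x ^ 3 +
    ((5 * dj ^ 2 - 6 * dj * Real.pi - h ^ 2) / (4 * Real.pi)) * x ^ 2 +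
    ((Real.pi - dj) * (5 * dj ^ 2 - 2 * Real.pi ^ 2 - h ^ 2) / (2 * Real.pi)) * x

/-- The kernel `sin (n u / 2) / sin (u / 2)`, with its removable singularities filled in. -/
noncomputable def dirichletQuot (n : ℕ) (u : ℝ) : ℝ :=
  (Polynomial.Chebyshev.U ℝ ((n : ℤ) - 1)).eval (Real.cos (u / 2))

lemma continuous_dirichletQuot (n : ℕ) : Continuous (dirichletQuot n) := by
  unfold dirichletQuot
  fun_prop

lemma dirichletQuot_mul_sin (n : ℕ) (u : ℝ) :
    dirichletQuot n u * Real.sin (u / 2) = Real.sin (n * u / 2) := by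
  unfold dirichletQuot
  rw [Polynomial.Chebyshev.U_real_cos]
  congr 1
  push_cast
  ring

lemma dirichletQuot_neg (n : ℕ) (u : ℝ) : dirichletQuot n (-u) = dirichletQuot n u := by
  unfold dirichletQuot
  rw [neg_div, Real.cos_neg]

lemma dirichletQuot_eq_div (n : ℕ) {u : ℝ} (hu : Real.sin (u / 2) ≠ 0) :
    dirichletQuot n u = Real.sin (n * u / 2) / Real.sin (u / 2) := by
  rw [eq_div_iff hu, dirichletQuot_mul_sin]

lemma dirichletQuot_add_two_pi_sq (n : ℕ) (u : ℝ) :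
    dirichletQuot n (u + 2 * Real.pi) ^ 2 = dirichletQuot n u ^ 2 := by
  have key : ∀ x : ℝ, (Polynomial.Chebyshev.U ℝ ((n : ℤ) - 1)).eval (-x) ^ 2 =
      (Polynomial.Chebyshev.U ℝ ((n : ℤ) - 1)).eval x ^ 2 := by
    intro x
    rcases n with _ | m
    · simp
    · rw [show ((m + 1 : ℕ) : ℤ) - 1 = (m : ℤ) by push_cast; ring,
        Polynomial.Chebyshev.U_eval_neg, mul_pow]
      rcases Int.units_eq_one_or ((m : ℤ).negOnePow) with h | h <;> simp [h]
  unfold dirichletQuot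
  rw [show (u + 2 * Real.pi) / 2 = u / 2 + Real.pi by ring, Real.cos_add_pi, key]

lemma dirichletQuot_lower {n : ℕ} {u : ℝ} (hu : 0 < u) (hun : n * u ≤ 2) (hu2 : u ≤ Real.pi) :
    2 * n / Real.pi ≤ dirichletQuot n u := by
  have hpi := Real.pi_pos
  have hs : 0 < Real.sin (u / 2) := Real.sin_pos_of_pos_of_lt_pi (by linarith) (by linarith)
  rw [dirichletQuot_eq_div n hs.ne', le_div_iff₀ hs]
  have h1 : 2 / Real.pi * (n * u / 2) ≤ Real.sin (n * u / 2) :=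
    Real.mul_le_sin (by positivity) (by linarith [Real.pi_gt_three])
  have h2 : Real.sin (u / 2) ≤ u / 2 := Real.sin_le (by linarith)
  calc 2 * n / Real.pi * Real.sin (u / 2) ≤ 2 * n / Real.pi * (u / 2) := by gcongr
    _ = 2 / Real.pi * (n * u / 2) := by ring
    _ ≤ _ := h1

lemma abs_dirichletQuot_le (n : ℕ) {u : ℝ} (hu : 0 < u) (hu2 : u ≤ Real.pi) :
    |dirichletQuot n u| ≤ Real.pi / u := by
  have hpi := Real.pi_pos
  have h1 : 2 / Real.pi * (u / 2) ≤ Real.sin (u / 2) :=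
    Real.mul_le_sin (by positivity) (by linarith)
  have hs : 0 < Real.sin (u / 2) := lt_of_lt_of_le (by positivity) h1
  rw [dirichletQuot_eq_div n hs.ne', abs_div, abs_of_pos hs, div_le_div_iff₀ hs hu]
  calc |Real.sin (n * u / 2)| * u ≤ 1 * u := by gcongr; exact Real.abs_sin_le_one _
    _ = Real.pi * (2 / Real.pi * (u / 2)) := by field_simp
    _ ≤ Real.pi * Real.sin (u / 2) := by gcongr

/-- Positivity on a half period: the mass of the kernel near the origin dominates the rest. -/
lemma integral_half_nonneg {n s b : ℕ} (hn : 9 ≤ n) (hb : s + 1 ≤ b) {R : ℝ → ℝ}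
    (hR : Continuous R)
    (hlow : ∀ u : ℝ, 0 ≤ u → n * u ≤ 18 → (1 - n * u / 18) ^ (2 * s) ≤ R u)
    (hup : ∀ u : ℝ, 0 ≤ u → |R u| ≤ (1 + n * u / 18) ^ (2 * s)) :
    0 ≤ ∫ u in (0 : ℝ)..Real.pi, dirichletQuot n u ^ (2 * b) * R u := by
  have hpi := Real.pi_pos
  have hpi3 := Real.pi_gt_three
  have hn9 : (9 : ℝ) ≤ n := by exact_mod_cast hn
  have hn0 : (0 : ℝ) < n := by linarith
  obtain ⟨p, hp⟩ : ∃ p, 2 * b = 2 * s + (p + 2) := ⟨2 * b - 2 * s - 2, by omega⟩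
  have hG : Continuous fun u => dirichletQuot n u ^ (2 * b) * R u :=
    ((continuous_dirichletQuot n).pow _).mul hR
  have hint : ∀ a c : ℝ, IntervalIntegrable (fun u => dirichletQuot n u ^ (2 * b) * R u)
      volume a c := fun a c => hG.intervalIntegrable a c
  have h18 : 18 / (n : ℝ) ≤ Real.pi := by rw [div_le_iff₀ hn0]; nlinarith
  have h2n : 2 / (n : ℝ) ≤ 18 / n := by gcongr; norm_num
  have hKpos : ∀ u, 0 ≤ dirichletQuot n u ^ (2 * b) := fun u => by
    rw [pow_mul]; positivity
  have hcore : (2 / n : ℝ) * ((2 * n / Real.pi) ^ (2 * b) * (8 / 9) ^ (2 * s)) ≤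
      ∫ u in (0 : ℝ)..(2 / n), dirichletQuot n u ^ (2 * b) * R u := by
    have := intervalIntegral.integral_mono_on_of_le_Ioo (a := 0) (b := 2 / (n : ℝ))
      (f := fun _ => (2 * n / Real.pi) ^ (2 * b) * (8 / 9 : ℝ) ^ (2 * s)) (μ := volume)
      (by positivity) intervalIntegrable_const (hint _ _) (by
        rintro u ⟨hu0, hu1⟩
        have hnu : n * u ≤ 2 := by rw [lt_div_iff₀ hn0] at hu1; linarith
        refine mul_le_mul ?_ ?_ (by positivity) (hKpos u)
        · exact pow_le_pow_left₀ (by positivity)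
            (dirichletQuot_lower hu0 hnu (by linarith)) _
        · refine le_trans ?_ (hlow u hu0.le (by linarith))
          exact pow_le_pow_left₀ (by norm_num) (by linarith) _)
    rwa [intervalIntegral.integral_const, sub_zero, smul_eq_mul] at this
  have hmid : 0 ≤ ∫ u in (2 / n : ℝ)..(18 / n), dirichletQuot n u ^ (2 * b) * R u := by
    refine intervalIntegral.integral_nonneg h2n fun u hu => mul_nonneg (hKpos u) ?_
    have hu0 : 0 ≤ u := le_trans (by positivity) hu.1
    have hnu : n * u ≤ 18 := by have := hu.2; rw [le_div_iff₀ hn0] at this; linarith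
    refine le_trans ?_ (hlow u hu0 hnu)
    rw [pow_mul]; positivity
  set C : ℝ := (Real.pi * n / 18) ^ p * (Real.pi * n / 9) ^ (2 * s) * Real.pi ^ 2 with hC
  have hC0 : 0 ≤ C := by positivity
  have hout : -(C * (n / 18)) ≤ ∫ u in (18 / n : ℝ)..Real.pi, dirichletQuot n u ^ (2 * b) * R u := by
    have hder : ∀ u ∈ Set.uIcc (18 / n : ℝ) Real.pi,
        HasDerivAt (fun u : ℝ => C * u⁻¹) (C * (-(u ^ 2)⁻¹)) u := by
      intro u hu
      rw [Set.uIcc_of_le h18] at hu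
      have : 0 < u := lt_of_lt_of_le (by positivity) hu.1
      exact (hasDerivAt_inv this.ne').const_mul C
    have hii : IntervalIntegrable (fun u : ℝ => C * (-(u ^ 2)⁻¹)) volume (18 / n) Real.pi := by
      refine ContinuousOn.intervalIntegrable ?_
      refine continuousOn_const.mul (ContinuousOn.neg (ContinuousOn.inv₀ (by fun_prop) ?_))
      intro u hu
      rw [Set.uIcc_of_le h18] at hu
      have : 0 < u := lt_of_lt_of_le (by positivity) hu.1
      positivity
    have hftc := intervalIntegral.integral_eq_sub_of_hasDerivAt hder hii
    have hmono := intervalIntegral.integral_mono_on_of_le_Ioo h18 hii (hint _ _) (by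
      rintro u ⟨hu0, hu1⟩
      have hu : 0 < u := lt_trans (by positivity) hu0
      have hnu : 18 ≤ n * u := by rw [div_lt_iff₀ hn0] at hu0; linarith
      have h1 : |dirichletQuot n u ^ (2 * b) * R u| ≤
          (Real.pi / u) ^ (2 * b) * (n * u / 9) ^ (2 * s) := by
        rw [abs_mul, abs_pow]
        gcongr
        · exact abs_dirichletQuot_le n hu hu1.le
        · refine (hup u hu.le).trans ?_
          gcongr
          linarith
      have h2 : (Real.pi / u) ^ (2 * b) * (n * u / 9) ^ (2 * s) ≤ C * (u ^ 2)⁻¹ := by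
        have e : (Real.pi / u) ^ (2 * b) * (n * u / 9) ^ (2 * s) =
            (Real.pi / u) ^ p * (Real.pi * n / 9) ^ (2 * s) * Real.pi ^ 2 * (u ^ 2)⁻¹ := by
          rw [hp, pow_add, mul_right_comm, ← mul_pow,
            show Real.pi / u * (n * u / 9) = Real.pi * n / 9 by field_simp, pow_add]
          field_simp
        rw [e, hC]
        gcongr ?_ ^ p * _ * _ * _
        rw [div_le_div_iff₀ hu (by norm_num)]
        nlinarith
      have := neg_abs_le (dirichletQuot n u ^ (2 * b) * R u)
      linarith)
    rw [hftc] at hmono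
    have e2 : (18 / (n : ℝ))⁻¹ = n / 18 := by rw [inv_div]
    rw [e2] at hmono
    have : 0 ≤ C * Real.pi⁻¹ := by positivity
    linarith
  have hcmp : C * (n / 18) ≤ (2 / n : ℝ) * ((2 * n / Real.pi) ^ (2 * b) * (8 / 9) ^ (2 * s)) := by
    have hpi4 : Real.pi ≤ 3.15 := Real.pi_lt_d2.le
    have hsq : Real.pi ^ 2 ≤ 10 := by nlinarith
    have e1 : (2 / n : ℝ) * ((2 * n / Real.pi) ^ (2 * b) * (8 / 9) ^ (2 * s)) =
        (2 * n / Real.pi) ^ p * (2 * n / Real.pi * (8 / 9)) ^ (2 * s) * (8 * n / Real.pi ^ 2) := by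
      rw [hp, pow_add, pow_add, mul_pow (2 * n / Real.pi) (8 / 9 : ℝ)]
      field_simp
      ring
    have e2 : C * (n / 18) = (Real.pi * n / 18) ^ p * (Real.pi * n / 9) ^ (2 * s) *
        (Real.pi ^ 2 * n / 18) := by rw [hC]; ring
    rw [e1, e2]
    gcongr ?_ ^ p * ?_ ^ (2 * s) * ?_
    · rw [div_le_div_iff₀ (by norm_num) hpi]; nlinarith
    · rw [div_mul_div_comm, div_le_div_iff₀ (by norm_num) (by positivity)]; nlinarith
    · rw [div_le_div_iff₀ (by norm_num) (by positivity)]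
      nlinarith [mul_le_mul hsq hsq (by positivity) (by norm_num)]
  have hsplit := intervalIntegral.integral_add_adjacent_intervals (hint 0 (2 / n))
    (hint (2 / n) (18 / n))
  have hsplit' := intervalIntegral.integral_add_adjacent_intervals (hint 0 (18 / n))
    (hint (18 / n) Real.pi)
  linarith

lemma trigPi_ratio_bounds {s n : ℕ} {y : ℤ → ℝ} {c : ℝ} (hn : 0 < n)
    (hc : ∀ i : ℤ, 9 / (n : ℝ) ≤ |Real.sin ((c - y i) / 2)|) (u : ℝ) :
    (n * |u| ≤ 18 → (1 - n * |u| / 18) ^ (2 * s) ≤ trigPi s y (c + u) / trigPi s y c) ∧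
      |trigPi s y (c + u) / trigPi s y c| ≤ (1 + n * |u| / 18) ^ (2 * s) := by
  have hn0 : (0 : ℝ) < n := by exact_mod_cast hn
  have hfac : ∀ i : ℤ, |Real.sin ((c + u - y i) / 2) / Real.sin ((c - y i) / 2) - 1| ≤
      n * |u| / 18 := by
    intro i
    have hpos : 0 < |Real.sin ((c - y i) / 2)| := lt_of_lt_of_le (by positivity) (hc i)
    have hne := abs_pos.mp hpos
    rw [div_sub_one hne, abs_div, div_le_iff₀ hpos]
    have h1 := Real.abs_sin_sub_sin_le ((c + u - y i) / 2) ((c - y i) / 2)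
    rw [show (c + u - y i) / 2 - (c - y i) / 2 = u / 2 by ring, abs_div, abs_two] at h1
    calc _ ≤ |u| / 2 := h1
      _ = n * |u| / 18 * (9 / n) := by field_simp; ring
      _ ≤ _ := by gcongr; exact hc i
  unfold trigPi
  rw [← Finset.prod_div_distrib]
  constructor
  · intro hu
    rw [← Finset.card_range (2 * s), ← Finset.prod_const, Finset.card_range]
    refine Finset.prod_le_prod (fun i _ => by linarith) fun i _ => ?_
    have := (abs_le.mp (hfac (i + 1))).1
    linarith
  · rw [Finset.abs_prod, ← Finset.card_range (2 * s), ← Finset.prod_const, Finset.card_range]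
    refine Finset.prod_le_prod (fun i _ => abs_nonneg _) fun i _ => ?_
    have := abs_le.mp (hfac (i + 1))
    rw [abs_le]
    constructor <;> linarith

lemma continuous_trigPi (s : ℕ) (y : ℤ → ℝ) : Continuous (trigPi s y) := by
  unfold trigPi
  fun_prop

lemma trigPi_add_two_pi (s : ℕ) (y : ℤ → ℝ) (x : ℝ) :
    trigPi s y (x + 2 * Real.pi) = trigPi s y x := by
  unfold trigPi
  have : ∀ i : ℕ, Real.sin ((x + 2 * Real.pi - y ((i : ℤ) + 1)) / 2) =
      (-1) * Real.sin ((x - y ((i : ℤ) + 1)) / 2) := by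
    intro i
    rw [show (x + 2 * Real.pi - y ((i : ℤ) + 1)) / 2 = (x - y ((i : ℤ) + 1)) / 2 + Real.pi by ring,
      Real.sin_add_pi]
    ring
  simp only [this]
  rw [Finset.prod_mul_distrib, Finset.prod_const, Finset.card_range, pow_mul]
  norm_num

lemma trigPi_ne_zero {s : ℕ} {y : ℤ → ℝ} {c : ℝ} (hc : ∀ i : ℤ, Real.sin ((c - y i) / 2) ≠ 0) :
    trigPi s y c ≠ 0 :=
  Finset.prod_ne_zero_iff.mpr fun _ _ => hc _

lemma integral_kernel_mul_trigPi_nonneg {s n b : ℕ} {y : ℤ → ℝ} {c : ℝ} (hn : 9 ≤ n)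
    (hb : s + 1 ≤ b) (hc : ∀ i : ℤ, 9 / (n : ℝ) ≤ |Real.sin ((c - y i) / 2)|) (a : ℝ) :
    0 ≤ (∫ u in a..(a + 2 * Real.pi), dirichletQuot n (u - c) ^ (2 * b) * trigPi s y u) *
      trigPi s y c := by
  have hn0 : (0 : ℝ) < n := by exact_mod_cast (by omega : 0 < n)
  have hP : trigPi s y c ≠ 0 := trigPi_ne_zero fun i =>
    abs_pos.mp (lt_of_lt_of_le (by positivity) (hc i))
  have hper : Function.Periodic (fun u => dirichletQuot n (u - c) ^ (2 * b) * trigPi s y u)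
      (2 * Real.pi) := by
    intro u
    simp only [trigPi_add_two_pi]
    rw [show u + 2 * Real.pi - c = u - c + 2 * Real.pi by ring, pow_mul,
      dirichletQuot_add_two_pi_sq, ← pow_mul]
  have hR : Continuous fun u => trigPi s y (c + u) / trigPi s y c :=
    ((continuous_trigPi s y).comp (by fun_prop)).div_const _
  have hG : Continuous fun u => dirichletQuot n u ^ (2 * b) * (trigPi s y (c + u) / trigPi s y c) :=
    ((continuous_dirichletQuot n).pow _).mul hR
  have h1 := integral_half_nonneg hn hb hR
    (fun u hu hnu => by
      have := (trigPi_ratio_bounds (s := s) (by omega) hc u).1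
      rw [abs_of_nonneg hu] at this
      exact this hnu)
    (fun u hu => by
      have := (trigPi_ratio_bounds (s := s) (by omega) hc u).2
      rwa [abs_of_nonneg hu] at this)
  have h2 := integral_half_nonneg hn hb (R := fun u => trigPi s y (c + -u) / trigPi s y c)
    (hR.comp continuous_neg)
    (fun u hu hnu => by
      have := (trigPi_ratio_bounds (s := s) (by omega) hc (-u)).1
      rw [abs_neg, abs_of_nonneg hu] at this
      exact this hnu)
    (fun u hu => by
      have := (trigPi_ratio_bounds (s := s) (by omega) hc (-u)).2
      rwa [abs_neg, abs_of_nonneg hu] at this)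
  have h3 : ∫ u in (0 : ℝ)..Real.pi, dirichletQuot n u ^ (2 * b) *
      (trigPi s y (c + -u) / trigPi s y c) = ∫ u in (-Real.pi)..0, dirichletQuot n u ^ (2 * b) *
      (trigPi s y (c + u) / trigPi s y c) := by
    have := intervalIntegral.integral_comp_neg (a := 0) (b := Real.pi)
      (fun u => dirichletQuot n u ^ (2 * b) * (trigPi s y (c + u) / trigPi s y c))
    simpa only [dirichletQuot_neg, neg_zero] using this
  rw [h3] at h2
  have h4 : 0 ≤ ∫ u in (-Real.pi)..Real.pi, dirichletQuot n u ^ (2 * b) *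
      (trigPi s y (c + u) / trigPi s y c) := by
    rw [← intervalIntegral.integral_add_adjacent_intervals
      (hG.intervalIntegrable (-Real.pi) 0) (hG.intervalIntegrable 0 Real.pi)]
    exact add_nonneg h2 h1
  have h5 : (∫ u in a..(a + 2 * Real.pi), dirichletQuot n (u - c) ^ (2 * b) * trigPi s y u) =
      trigPi s y c * ∫ u in (-Real.pi)..Real.pi, dirichletQuot n u ^ (2 * b) *
      (trigPi s y (c + u) / trigPi s y c) := by
    rw [hper.intervalIntegral_add_eq a (c + -Real.pi), ← intervalIntegral.integral_const_mul,
      show c + -Real.pi + 2 * Real.pi = c + Real.pi by ring,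
      ← intervalIntegral.integral_comp_add_left _ c]
    refine intervalIntegral.integral_congr fun u _ => ?_
    simp only [add_sub_cancel_left]
    field_simp
  rw [h5, mul_right_comm]
  exact mul_nonneg (mul_self_nonneg _) h4

lemma y_add_period {s : ℕ} {y : ℤ → ℝ}
    (hper : ∀ i : ℤ, y (i + 2 * (s : ℤ)) = y i - 2 * Real.pi) (i k : ℤ) :
    y (i + 2 * (s : ℤ) * k) = y i - 2 * Real.pi * k := by
  induction k using Int.induction_on with
  | zero => simp
  | succ k ih =>
    rw [show i + 2 * (s : ℤ) * (k + 1) = i + 2 * (s : ℤ) * k + 2 * s by ring, hper, ih]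
    push_cast
    ring
  | pred k ih =>
    have := hper (i + 2 * (s : ℤ) * (-k - 1))
    rw [show i + 2 * (s : ℤ) * (-k - 1) + 2 * s = i + 2 * (s : ℤ) * -k by ring, ih] at this
    push_cast at this ⊢
    linarith

lemma nine_div_le_abs_sin {s n : ℕ} {y : ℤ → ℝ} {c : ℝ} (hn : 0 < n)
    (hper : ∀ i : ℤ, y (i + 2 * (s : ℤ)) = y i - 2 * Real.pi)
    (hc : ∀ i : ℤ, 9 * (Real.pi / n) ≤ |c - y i|) (i : ℤ) :
    9 / (n : ℝ) ≤ |Real.sin ((c - y i) / 2)| := by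
  have hpi := Real.pi_pos
  have hn0 : (0 : ℝ) < n := by exact_mod_cast hn
  set k : ℤ := round ((c - y i) / (2 * Real.pi)) with hk
  set r : ℝ := c - y i - 2 * Real.pi * k with hr
  have hr1 : |r / 2| ≤ Real.pi / 2 := by
    have h := abs_sub_round ((c - y i) / (2 * Real.pi))
    rw [← hk] at h
    have e : r / 2 = Real.pi * ((c - y i) / (2 * Real.pi) - k) := by
      rw [hr]; field_simp
    rw [e, abs_mul, abs_of_pos hpi]
    nlinarith
  have hr2 : 9 * (Real.pi / n) ≤ |r| := by
    have h := hc (i + 2 * (s : ℤ) * (-k))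
    rw [y_add_period hper] at h
    push_cast at h
    rwa [show c - (y i - 2 * Real.pi * -(k : ℝ)) = r by rw [hr]; ring] at h
  have h3 : |Real.sin (r / 2)| = |Real.sin ((c - y i) / 2)| := by
    rw [show r / 2 = (c - y i) / 2 - k * Real.pi by rw [hr]; ring, Real.sin_sub_int_mul_pi,
      abs_mul, abs_neg_one_zpow, one_mul]
  rw [← h3]
  refine le_trans ?_ (Real.mul_abs_le_abs_sin hr1)
  rw [abs_div, abs_two]
  calc 9 / (n : ℝ) = 2 / Real.pi * (9 * (Real.pi / n) / 2) := by field_simp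
    _ ≤ _ := by gcongr

lemma node_dist {y : ℤ → ℝ} {n : ℕ} (hn : 0 < n) {j : ℤ} (hj : memH y n 10 j) (i : ℤ) :
    9 * (Real.pi / n) ≤ |xnode n j - y i| ∧ 9 * (Real.pi / n) ≤ |xnode n (j - 1) - y i| := by
  have hpi := Real.pi_pos
  have hn0 : (0 : ℝ) < n := by exact_mod_cast hn
  have hh : 0 < Real.pi / n := by positivity
  have hmem : xnode n j ∉ Oint y n 10 i := fun h => hj (Set.mem_iUnion.mpr ⟨i, h⟩)
  have hz : -(y i) * n / Real.pi * (Real.pi / n) = -(y i) := by field_simp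
  have hy1 := mul_le_mul_of_nonneg_right (Int.le_ceil (-(y i) * n / Real.pi)) hh.le
  have hy2 := mul_lt_mul_of_pos_right (Int.ceil_lt_add_one (-(y i) * n / Real.pi)) hh
  change _ ≤ ((jIdx y n i : ℤ) : ℝ) * _ at hy1
  change ((jIdx y n i : ℤ) : ℝ) * _ < _ at hy2
  rw [add_mul, hz] at hy2
  rw [hz] at hy1
  unfold Oint at hmem
  rw [Set.mem_Ioo, not_and_or, not_lt, not_lt] at hmem
  unfold xnode at *
  push_cast at hmem ⊢
  rcases hmem with h | h
  · constructor <;> rw [abs_sub_comm] <;> refine le_trans ?_ (le_abs_self _) <;> nlinarith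
  · constructor <;> refine le_trans ?_ (le_abs_self _) <;> nlinarith

lemma trigPi_shift_div_nonneg {s n : ℕ} {y : ℤ → ℝ} {c : ℝ} (hn : 0 < n)
    (hc : ∀ i : ℤ, 9 / (n : ℝ) ≤ |Real.sin ((c - y i) / 2)|) :
    0 ≤ trigPi s y (c + Real.pi / n) / trigPi s y c := by
  have hn0 : (0 : ℝ) < n := by exact_mod_cast hn
  have hpi := Real.pi_pos
  have hnu : n * |Real.pi / n| ≤ 18 := by
    rw [abs_of_pos (by positivity), mul_div_cancel₀ _ hn0.ne']
    linarith [Real.pi_lt_four]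
  refine le_trans ?_ ((trigPi_ratio_bounds (s := s) hn hc (Real.pi / n)).1 hnu)
  rw [pow_mul]
  positivity

lemma Jker_ae_eq (n b : ℕ) (j : ℤ) :
    ∀ᵐ u : ℝ, Jker n b j u = dirichletQuot n (u - xnode n j) ^ (2 * b) +
      dirichletQuot n (u - xnode n (j - 1)) ^ (2 * b) := by
  have hnull : ∀ c : ℝ, ∀ᵐ u : ℝ, Real.sin ((u - c) / 2) ≠ 0 := by
    intro c
    have hcount : {u : ℝ | Real.sin ((u - c) / 2) = 0}.Countable := by
      refine (Set.countable_range fun k : ℤ => c + 2 * (k * Real.pi)).mono ?_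
      intro u hu
      obtain ⟨k, hk⟩ := Real.sin_eq_zero_iff.mp hu
      exact ⟨k, by simp only [hk]; ring⟩
    filter_upwards [hcount.ae_notMem volume] with u hu using hu
  filter_upwards [hnull (xnode n j), hnull (xnode n (j - 1))] with u h1 h2
  rw [dirichletQuot_eq_div n h1, dirichletQuot_eq_div n h2, Jker]

theorem stmt2_tj_deriv_sign
    (s : ℕ) (hs : 0 < s) (y : ℤ → ℝ)
    (hper : ∀ i : ℤ, y (i + 2 * (s : ℤ)) = y i - 2 * Real.pi)
    (hmono : ∀ i : ℤ, 1 ≤ i → i < 2 * (s : ℤ) → y (i + 1) < y i)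
    (hlow : -Real.pi ≤ y (2 * (s : ℤ))) (hhigh : y 1 < Real.pi)
    (N : ℕ) (hN : ∀ n : ℕ, N ≤ n → ∀ i : ℤ, 1 ≤ i → i ≤ 2 * (s : ℤ) →
      Oint y n 30 i ∩ Oint y n 30 (i - 1) = ∅)
    (n : ℕ) (hn : N ≤ n) (hn0 : 0 < n)
    (b : ℕ) (hb : s + 2 ≤ b)
    (j : ℤ) (hj : memH y n 10 j) (hjn : |j| ≤ (n : ℤ)) :
    Differentiable ℝ (tfun s y n b j) ∧
      ∀ x : ℝ, 0 ≤ deriv (tfun s y n b j) x * trigPi s y x * trigPi s y (xnode n j) := by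
  have hpi := Real.pi_pos
  have hnR : (0 : ℝ) < n := by exact_mod_cast hn0
  have hc1 := nine_div_le_abs_sin hn0 hper fun i => (node_dist hn0 hj i).1
  have hc2 := nine_div_le_abs_sin hn0 hper fun i => (node_dist hn0 hj i).2
  have hn9 : 9 ≤ n := by
    have := (hc1 0).trans (Real.abs_sin_le_one _)
    rw [div_le_one hnR] at this
    exact_mod_cast this
  have hnode : xnode n (j - 1) = xnode n j + Real.pi / n := by
    unfold xnode; push_cast; ring
  have hP1 : trigPi s y (xnode n j) ≠ 0 := trigPi_ne_zero fun i =>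
    abs_pos.mp (lt_of_lt_of_le (by positivity) (hc1 i))
  have hP2 : trigPi s y (xnode n (j - 1)) ≠ 0 := trigPi_ne_zero fun i =>
    abs_pos.mp (lt_of_lt_of_le (by positivity) (hc2 i))
  have hratio : 0 ≤ trigPi s y (xnode n (j - 1)) / trigPi s y (xnode n j) := by
    rw [hnode]; exact trigPi_shift_div_nonneg hn0 hc1
  have hcont : ∀ c : ℝ, Continuous fun u => dirichletQuot n (u - c) ^ (2 * b) * trigPi s y u :=
    fun c => (((continuous_dirichletQuot n).comp (by fun_prop)).pow _).mul (continuous_trigPi s y)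
  set G : ℝ → ℝ := fun u => dirichletQuot n (u - xnode n j) ^ (2 * b) * trigPi s y u +
    dirichletQuot n (u - xnode n (j - 1)) ^ (2 * b) * trigPi s y u with hG
  have hGc : Continuous G := (hcont _).add (hcont _)
  have hcongr : ∀ a c : ℝ, ∫ u in a..c, Jker n b j u * trigPi s y u = ∫ u in a..c, G u := by
    intro a c
    refine intervalIntegral.integral_congr_ae ?_
    filter_upwards [Jker_ae_eq n b j] with u hu _
    rw [hu, add_mul]
  set D : ℝ := ∫ u in (xnode n j - Real.pi)..(xnode n j + Real.pi), G u with hD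
  have hDpos : 0 ≤ D * trigPi s y (xnode n j) := by
    have h1 := integral_kernel_mul_trigPi_nonneg hn9 (by omega : s + 1 ≤ b) hc1
      (xnode n j - Real.pi)
    have h2 := integral_kernel_mul_trigPi_nonneg hn9 (by omega : s + 1 ≤ b) hc2
      (xnode n j - Real.pi)
    have h3 := mul_nonneg h2 (inv_nonneg.mpr hratio)
    rw [inv_div, mul_assoc, mul_div_cancel₀ _ hP2] at h3
    rw [show xnode n j - Real.pi + 2 * Real.pi = xnode n j + Real.pi by ring] at h1 h3
    rw [hD, hG, intervalIntegral.integral_add ((hcont _).intervalIntegrable _ _)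
      ((hcont _).intervalIntegrable _ _), add_mul]
    exact add_nonneg h1 h3
  have htfun : tfun s y n b j = fun x => (∫ u in (xnode n j - Real.pi)..x, G u) / D := by
    funext x
    rw [tfun, hcongr, hcongr]
  have hder : ∀ x, HasDerivAt (tfun s y n b j) (G x / D) x := by
    intro x
    rw [htfun]
    exact (hGc.integral_hasStrictDerivAt _ x).hasDerivAt.div_const D
  refine ⟨fun x => (hder x).differentiableAt, fun x => ?_⟩
  rw [(hder x).deriv]
  have hfactor : G x / D * trigPi s y x * trigPi s y (xnode n j) =
      ((dirichletQuot n (x - xnode n j) ^ b) ^ 2 +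
        (dirichletQuot n (x - xnode n (j - 1)) ^ b) ^ 2) * trigPi s y x ^ 2 *
        (trigPi s y (xnode n j) / D) := by
    rw [hG]
    ring
  have hquot : 0 ≤ trigPi s y (xnode n j) / D := by
    rcases mul_nonneg_iff.mp hDpos with ⟨h1, h2⟩ | ⟨h1, h2⟩
    · exact div_nonneg h2 h1
    · exact div_nonneg_of_nonpos h2 h1
  rw [hfactor]
  positivity
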